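/- Let H ∈ (1/2, 1), α_H = H(2H−1), and c_H = Γ(2H+1) sin(πH)/(2π). Let φ, ψ : ℝ → [0, ∞) be integrable functions such that the energies E(φ) := α_H ∫_ℝ ∫_ℝ φ(x) φ(y) |x − y|^{2H−2} dx dy and E(ψ) are finite. Then α_H ∫_ℝ ∫_ℝ φ(x) ψ(y) |x − y|^{2H−2} dx dy = c_H ∫_ℝ (𝓕φ)(ξ) conj((𝓕ψ)(ξ)) |ξ|^{1−2H} dξ, and in particular E(φ) = c_H ∫_ℝ |(𝓕φ)(ξ)|² |ξ|^{1−2H} dξ. -/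

import Mathlib

open MeasureTheory Real

/-- The Fourier transform `(𝓕φ)(ξ) = ∫ e^{-iξx} φ(x) dx` of a real-valued function. -/
noncomputable def fourierT (φ : ℝ → ℝ) (ξ : ℝ) : ℂ :=
  ∫ x : ℝ, Complex.exp (-(Complex.I * (ξ : ℂ) * (x : ℂ))) * (φ x : ℂ)

/-!
Since `Γ_ℝ(s) r^{-s} = ∫₀^∞ t^{s/2-1} e^{-πtr²} dt`, the Riesz kernel `‖x - y‖^{-s}` on a
`d`-dimensional space is a superposition of Gaussians. The Fourier transform exchanges
`e^{-πt‖x‖²}` with `t^{-d/2} e^{-π‖ξ‖²/t}`, so Parseval holds at each time `t`, and integrating over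
`t` reassembles the frequency side into `Γ_ℝ(d-s) ‖ξ‖^{-(d-s)}`.

Both exchanges of integrals need absolute convergence. For `φ = ψ` the frequency integrand is
nonnegative, so finite energy of `φ` makes it integrable; `2|ab| ≤ |a|² + |b|²` then handles
different `φ` and `ψ` on the frequency side. Applied to `|φ|` and `|ψ|`, whose spatial integrand is
nonnegative, this comes back as absolute convergence of the mixed energy.
-/

open Module (finrank)
open Set (Ioi)
open Complex (Gammaℝ)
open scoped FourierTransform ComplexConjugate ComplexOrder RealInnerProductSpace

local notation "vol₊" => Measure.restrict (volume : Measure ℝ) (Ioi 0)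

section Integration

variable {α β : Type*} [MeasurableSpace α] [MeasurableSpace β] {μ : Measure α} {ν : Measure β}

lemma integral_norm_eq_norm_integral_of_nonneg {f : α → ℂ} (hf : 0 ≤ᵐ[μ] f) :
    ∫ a, ‖f a‖ ∂μ = ‖∫ a, f a ∂μ‖ := by
  have hf_norm : f =ᵐ[μ] fun a => (‖f a‖ : ℂ) := hf.mono fun a => Complex.eq_coe_norm_of_nonneg
  rw [integral_congr_ae hf_norm, integral_complex_ofReal, Complex.norm_real,
    Real.norm_of_nonneg (integral_nonneg fun a => norm_nonneg _)]

lemma integrable_prod_of_integrable_integral_of_nonneg [SFinite ν] {F : α × β → ℂ}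
    (hF : AEStronglyMeasurable F (μ.prod ν)) (hF_nonneg : ∀ᵐ a ∂μ, ∀ b, 0 ≤ F (a, b))
    (hF_slice : ∀ᵐ a ∂μ, Integrable (fun b => F (a, b)) ν)
    (hF_int : Integrable (fun a => ∫ b, F (a, b) ∂ν) μ) : Integrable F (μ.prod ν) := by
  refine (integrable_prod_iff hF).2 ⟨hF_slice, hF_int.norm.congr ?_⟩
  filter_upwards [hF_nonneg] with a ha
  exact (integral_norm_eq_norm_integral_of_nonneg (.of_forall ha)).symm

lemma integral_mul_conj_self_mul_ofReal (f : α → ℂ) (w : α → ℝ) :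
    ∫ a, f a * conj (f a) * (w a : ℂ) ∂μ = ((∫ a, ‖f a‖ ^ 2 * w a ∂μ : ℝ) : ℂ) := by
  simp only [Complex.mul_conj', ← Complex.ofReal_pow, ← Complex.ofReal_mul, integral_complex_ofReal]

end Integration

section GammaIntegrals

variable {a r : ℝ}

lemma Gammaℝ_ofReal_ne_zero (ha : 0 < a) : Gammaℝ a ≠ 0 :=
  Complex.Gammaℝ_ne_zero_of_re_pos (by simpa using ha)

lemma Gammaℝ_ofReal (a : ℝ) : Gammaℝ a = ((π ^ (-a / 2) * Gamma (a / 2) : ℝ) : ℂ) := by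
  rw [Complex.Gammaℝ_def, Complex.ofReal_mul, Complex.ofReal_cpow pi_pos.le, ← Complex.Gamma_ofReal]
  push_cast
  rfl

lemma integral_rpow_mul_exp_neg_pi_sq_mul (ha : 0 < a) (hr : 0 < r) :
    ∫ t in Ioi (0 : ℝ), ((t ^ (a / 2 - 1) * rexp (-(π * r ^ 2 * t)) : ℝ) : ℂ)
      = Gammaℝ a * (r ^ (-a) : ℝ) := by
  have hπr : (1 / (π * r ^ 2)) ^ (a / 2) = π ^ (-a / 2) * r ^ (-a) := by
    rw [one_div, inv_rpow (by positivity), ← rpow_neg (by positivity),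
      mul_rpow pi_pos.le (by positivity), ← rpow_natCast, ← rpow_mul hr.le]
    congr 2 <;> push_cast <;> ring
  rw [integral_complex_ofReal, integral_rpow_mul_exp_neg_mul_Ioi (by positivity) (by positivity),
    hπr, Gammaℝ_ofReal, ← Complex.ofReal_mul]
  congr 1
  ring

lemma integrable_rpow_mul_exp_neg_pi_sq_mul (ha : 0 < a) (hr : 0 < r) :
    Integrable (fun t : ℝ => ((t ^ (a / 2 - 1) * rexp (-(π * r ^ 2 * t)) : ℝ) : ℂ)) vol₊ := by
  refine .of_integral_ne_zero ?_
  rw [integral_rpow_mul_exp_neg_pi_sq_mul ha hr]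
  exact mul_ne_zero (Gammaℝ_ofReal_ne_zero ha) (Complex.ofReal_ne_zero.2 (by positivity))

lemma integral_rpow_mul_exp_neg_pi_sq_div (ha : 0 < a) (hr : 0 < r) :
    ∫ t in Ioi (0 : ℝ), ((t ^ (-a / 2 - 1) * rexp (-(π * r ^ 2 / t)) : ℝ) : ℂ)
      = Gammaℝ a * (r ^ (-a) : ℝ) := by
  rw [← integral_rpow_mul_exp_neg_pi_sq_mul ha hr,
    ← integral_comp_rpow_Ioi (fun t => ((t ^ (a / 2 - 1) * rexp (-(π * r ^ 2 * t)) : ℝ) : ℂ))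
      (by norm_num : (-1 : ℝ) ≠ 0)]
  refine setIntegral_congr_fun measurableSet_Ioi fun t (ht : 0 < t) => ?_
  have hpow : t ^ (-a / 2 - 1) = t ^ (-1 - 1 : ℝ) * (t ^ (-1 : ℝ)) ^ (a / 2 - 1) := by
    rw [← rpow_mul ht.le, ← rpow_add ht]
    ring_nf
  rw [hpow, rpow_neg_one, Complex.real_smul, abs_neg, abs_one, one_mul, ← Complex.ofReal_mul,
    mul_assoc, div_eq_mul_inv (π * r ^ 2)]

end GammaIntegrals

section Fourier

/-- The bilinear pairing `(x, y), ξ ↦ ⟪x - y, ξ⟫`; integrating against its character turns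
`φ(x) conj (ψ(y))` into `𝓕 φ ξ * conj (𝓕 ψ ξ)`. -/
noncomputable def diffPairing (V : Type*) [NormedAddCommGroup V] [InnerProductSpace ℝ V] :
    V × V →ₗ[ℝ] V →ₗ[ℝ] ℝ :=
  innerₗ V ∘ₗ (LinearMap.fst ℝ V V - LinearMap.snd ℝ V V)

lemma diffPairing_apply {V : Type*} [NormedAddCommGroup V] [InnerProductSpace ℝ V] (p : V × V)
    (ξ : V) : diffPairing V p ξ = ⟪p.1 - p.2, ξ⟫ := rfl

variable {V : Type*} [NormedAddCommGroup V] [InnerProductSpace ℝ V] [FiniteDimensional ℝ V]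
  [MeasurableSpace V] [BorelSpace V] {φ ψ : V → ℂ}

lemma continuous_fourier_of_integrable (hφ : Integrable φ) : Continuous (𝓕 φ) :=
  VectorFourier.fourierIntegral_continuous continuous_fourierChar continuous_inner hφ

lemma norm_fourier_le_integral_norm (φ : V → ℂ) (ξ : V) : ‖𝓕 φ ξ‖ ≤ ∫ x, ‖φ x‖ :=
  VectorFourier.norm_fourierIntegral_le_integral_norm 𝐞 volume (innerₗ V) φ ξ

lemma conj_fourier (ψ : V → ℂ) (ξ : V) : conj (𝓕 ψ ξ) = ∫ y, 𝐞 ⟪y, ξ⟫ • conj (ψ y) := by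
  simp only [fourier_eq, ← integral_conj, Circle.smul_def, smul_eq_mul, map_mul,
    ← Circle.coe_inv_eq_conj, ← AddChar.map_neg_eq_inv, neg_neg]

lemma fourierIntegral_diffPairing (φ ψ : V → ℂ) (ξ : V) :
    VectorFourier.fourierIntegral 𝐞 volume (diffPairing V)
      (fun p => φ p.1 * conj (ψ p.2)) ξ = 𝓕 φ ξ * conj (𝓕 ψ ξ) := by
  rw [conj_fourier, fourier_eq, ← integral_prod_mul]
  refine integral_congr_ae (.of_forall fun p => ?_)
  have hchar : 𝐞 (-diffPairing V p ξ) = 𝐞 (-⟪p.1, ξ⟫) * 𝐞 ⟪p.2, ξ⟫ := by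
    rw [← AddChar.map_add_eq_mul, diffPairing_apply, inner_sub_left]
    ring_nf
  simp only [hchar, smul_mul_smul_comm]

lemma fourierIntegral_diffPairing_flip (w : V → ℂ) (p : V × V) :
    VectorFourier.fourierIntegral 𝐞 volume (diffPairing V).flip w p = 𝓕 w (p.1 - p.2) := by
  simp only [VectorFourier.fourierIntegral, LinearMap.flip_apply, diffPairing_apply, fourier_eq,
    real_inner_comm]

lemma integral_fourier_mul_conj_fourier_mul {w : V → ℂ} (hφ : Integrable φ) (hψ : Integrable ψ)
    (hw : Integrable w) :
    ∫ ξ, 𝓕 φ ξ * conj (𝓕 ψ ξ) * w ξ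
      = ∫ p : V × V, φ p.1 * conj (ψ p.2) * 𝓕 w (p.1 - p.2) := by
  have hψ_conj : Integrable fun x => conj (ψ x) := Complex.conjLIE.integrable_comp_iff.2 hψ
  have hpair : Continuous fun p : (V × V) × V => diffPairing V p.1 p.2 := by
    simp only [diffPairing_apply]
    fun_prop
  have h := VectorFourier.integral_fourierIntegral_smul_eq_flip (L := diffPairing V)
    continuous_fourierChar hpair (hφ.mul_prod hψ_conj) hw
  simpa only [← Measure.volume_eq_prod, fourierIntegral_diffPairing,
    fourierIntegral_diffPairing_flip, smul_eq_mul] using h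

lemma fourier_exp_neg_pi_sq_div {t : ℝ} (ht : 0 < t) (x : V) :
    𝓕 (fun ξ : V => ((rexp (-(π * ‖ξ‖ ^ 2 / t)) : ℝ) : ℂ)) x
      = ((t ^ (finrank ℝ V / 2 : ℝ) * rexp (-(π * ‖x‖ ^ 2 * t)) : ℝ) : ℂ) := by
  have h := fourier_gaussian_innerProductSpace (b := ((π / t : ℝ) : ℂ))
    (by rw [Complex.ofReal_re]; positivity) x
  have ht' : (t : ℂ) ≠ 0 := by exact_mod_cast ht.ne'
  have hπ : (π : ℂ) ≠ 0 := by exact_mod_cast pi_ne_zero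
  convert h using 2
  · ext ξ
    push_cast
    ring_nf
  · rw [← Complex.ofReal_div, div_div_cancel₀ pi_ne_zero, Complex.ofReal_mul,
      Complex.ofReal_cpow ht.le]
    push_cast
    congr 2
    field_simp

end Fourier

section Subordination

variable {V : Type*} [NormedAddCommGroup V] {s a t : ℝ} {φ ψ f g : V → ℂ}

/-- The integrand of the mutual Riesz energy of order `s` of `φ` and `ψ`. -/
noncomputable def rieszEnergyDensity (s : ℝ) (φ ψ : V → ℂ) (p : V × V) : ℂ :=
  φ p.1 * conj (ψ p.2) * (‖p.1 - p.2‖ ^ (-s) : ℝ)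

/-- The Gaussian subordination of `rieszEnergyDensity` as a function of `(t, (x, y))`: its integral
over `t > 0` is `Γ_ℝ(s)` times the density. -/
noncomputable def spatialIntegrand (s : ℝ) (φ ψ : V → ℂ) (z : ℝ × V × V) : ℂ :=
  φ z.2.1 * conj (ψ z.2.2) *
    (z.1 ^ (s / 2 - 1) * rexp (-(π * ‖z.2.1 - z.2.2‖ ^ 2 * z.1)) : ℝ)

/-- The frequency counterpart of `spatialIntegrand` as a function of `(t, ξ)`, meant for `f = 𝓕 φ`,
`g = 𝓕 ψ` and `a = d - s`: its exponent is then `-a / 2 - 1 = (s / 2 - 1) - d / 2`, the last term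
coming from the Fourier transform of the Gaussian. -/
noncomputable def spectralIntegrand (a : ℝ) (f g : V → ℂ) (z : ℝ × V) : ℂ :=
  f z.2 * conj (g z.2) * (z.1 ^ (-a / 2 - 1) * rexp (-(π * ‖z.2‖ ^ 2 / z.1)) : ℝ)

lemma integral_time_spatialIntegrand (hs : 0 < s) {p : V × V} (hp : 0 < ‖p.1 - p.2‖) :
    ∫ t in Ioi 0, spatialIntegrand s φ ψ (t, p) = Gammaℝ s * rieszEnergyDensity s φ ψ p := by
  simp only [spatialIntegrand, rieszEnergyDensity]
  rw [integral_const_mul, integral_rpow_mul_exp_neg_pi_sq_mul hs hp]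
  ring

lemma integral_time_spectralIntegrand (ha : 0 < a) {ξ : V} (hξ : 0 < ‖ξ‖) :
    ∫ t in Ioi 0, spectralIntegrand a f g (t, ξ)
      = Gammaℝ a * (f ξ * conj (g ξ) * (‖ξ‖ ^ (-a) : ℝ)) := by
  simp only [spectralIntegrand]
  rw [integral_const_mul, integral_rpow_mul_exp_neg_pi_sq_div ha hξ]
  ring

lemma integral_time_norm_spatialIntegrand (φ ψ : V → ℂ) (p : V × V) :
    ∫ t in Ioi 0, ‖spatialIntegrand s φ ψ (t, p)‖
      = ‖∫ t in Ioi 0, spatialIntegrand s φ ψ (t, p)‖ := by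
  simp only [spatialIntegrand, norm_mul (_ * _), integral_const_mul]
  congr 1
  refine integral_norm_eq_norm_integral_of_nonneg ?_
  filter_upwards [ae_restrict_mem measurableSet_Ioi] with t (ht : 0 < t)
  exact Complex.zero_le_real.2 (by positivity)

lemma integrable_time_spatialIntegrand (hs : 0 < s) {p : V × V} (hp : 0 < ‖p.1 - p.2‖) :
    Integrable (fun t => spatialIntegrand s φ ψ (t, p)) vol₊ :=
  (integrable_rpow_mul_exp_neg_pi_sq_mul hs hp).const_mul (φ p.1 * conj (ψ p.2))

lemma norm_spatialIntegrand_norm (s : ℝ) (φ ψ : V → ℂ) (z : ℝ × V × V) :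
    ‖spatialIntegrand s (fun x => (‖φ x‖ : ℂ)) (fun x => (‖ψ x‖ : ℂ)) z‖
      = ‖spatialIntegrand s φ ψ z‖ := by
  simp [spatialIntegrand]

lemma spatialIntegrand_nonneg (hφ : 0 ≤ φ) (hψ : 0 ≤ ψ) (ht : 0 < t) (p : V × V) :
    0 ≤ spatialIntegrand s φ ψ (t, p) :=
  mul_nonneg (mul_nonneg (hφ p.1) (star_nonneg_iff.2 (hψ p.2)))
    (Complex.zero_le_real.2 (by positivity))

lemma spectralIntegrand_self_nonneg (ht : 0 < t) (ξ : V) :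
    0 ≤ spectralIntegrand a f f (t, ξ) :=
  mul_nonneg (mul_star_self_nonneg (f ξ)) (Complex.zero_le_real.2 (by positivity))

lemma norm_spectralIntegrand_le (a : ℝ) (f g : V → ℂ) (z : ℝ × V) :
    ‖spectralIntegrand a f g z‖
      ≤ ‖spectralIntegrand a f f z‖ + ‖spectralIntegrand a g g z‖ := by
  simp only [spectralIntegrand, norm_mul, RCLike.norm_conj, ← add_mul]
  gcongr
  nlinarith [sq_nonneg (‖f z.2‖ - ‖g z.2‖), norm_nonneg (f z.2), norm_nonneg (g z.2)]

section Measurability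

variable [MeasurableSpace V] [BorelSpace V] {μ : Measure V}

lemma aestronglyMeasurable_spectralIntegrand (a : ℝ) (hf : AEStronglyMeasurable f μ)
    (hg : AEStronglyMeasurable g μ) :
    AEStronglyMeasurable (spectralIntegrand a f g) (vol₊.prod μ) := by
  have hg_conj := Complex.continuous_conj.comp_aestronglyMeasurable hg
  exact (hf.mul hg_conj).comp_snd.mul (Measurable.aestronglyMeasurable (by fun_prop))

lemma integrable_spectralIntegrand_of_self
    (hf : AEStronglyMeasurable f μ) (hg : AEStronglyMeasurable g μ)
    (hff : Integrable (spectralIntegrand a f f) (vol₊.prod μ))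
    (hgg : Integrable (spectralIntegrand a g g) (vol₊.prod μ)) :
    Integrable (spectralIntegrand a f g) (vol₊.prod μ) :=
  (hff.norm.add hgg.norm).mono' (aestronglyMeasurable_spectralIntegrand a hf hg)
    (.of_forall (norm_spectralIntegrand_le a f g))

variable [SecondCountableTopology V]

lemma aestronglyMeasurable_spatialIntegrand (s : ℝ) (hφ : AEStronglyMeasurable φ μ)
    (hψ : AEStronglyMeasurable ψ μ) :
    AEStronglyMeasurable (spatialIntegrand s φ ψ) (vol₊.prod (μ.prod μ)) := by
  have hψ_conj := Complex.continuous_conj.comp_aestronglyMeasurable hψ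
  exact (hφ.comp_fst.mul hψ_conj.comp_snd).comp_snd.mul
    (Measurable.aestronglyMeasurable (by fun_prop))

lemma aestronglyMeasurable_rieszEnergyDensity (s : ℝ) (hφ : AEStronglyMeasurable φ μ)
    (hψ : AEStronglyMeasurable ψ μ) :
    AEStronglyMeasurable (rieszEnergyDensity s φ ψ) (μ.prod μ) := by
  have hψ_conj := Complex.continuous_conj.comp_aestronglyMeasurable hψ
  exact (hφ.comp_fst.mul hψ_conj.comp_snd).mul (Measurable.aestronglyMeasurable (by fun_prop))

lemma integrable_spatialIntegrand_norm_iff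
    (hφ : AEStronglyMeasurable φ μ) (hψ : AEStronglyMeasurable ψ μ) :
    Integrable (spatialIntegrand s (fun x => (‖φ x‖ : ℂ)) fun x => (‖ψ x‖ : ℂ))
        (vol₊.prod (μ.prod μ))
      ↔ Integrable (spatialIntegrand s φ ψ) (vol₊.prod (μ.prod μ)) :=
  have hφ_norm := Complex.continuous_ofReal.comp_aestronglyMeasurable hφ.norm
  have hψ_norm := Complex.continuous_ofReal.comp_aestronglyMeasurable hψ.norm
  integrable_congr' (aestronglyMeasurable_spatialIntegrand s hφ_norm hψ_norm)
    (aestronglyMeasurable_spatialIntegrand s hφ hψ)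
    (.of_forall (norm_spatialIntegrand_norm s φ ψ))

lemma integrable_spatialIntegrand_slice (hφ : Integrable φ μ) (hψ : Integrable ψ μ) (ht : 0 < t) :
    Integrable (fun p => spatialIntegrand s φ ψ (t, p)) (μ.prod μ) := by
  have hψ_conj : Integrable (fun x => conj (ψ x)) μ := Complex.conjLIE.integrable_comp_iff.2 hψ
  refine (hφ.mul_prod hψ_conj).mul_bdd (c := t ^ (s / 2 - 1))
    (Measurable.aestronglyMeasurable (by fun_prop)) (.of_forall fun p => ?_)
  rw [Complex.norm_real, Real.norm_of_nonneg (by positivity)]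
  exact mul_le_of_le_one_right (by positivity) (exp_le_one_iff.2 (neg_nonpos.2 (by positivity)))

end Measurability

variable [InnerProductSpace ℝ V] [FiniteDimensional ℝ V] [MeasurableSpace V] [BorelSpace V]

lemma ae_norm_sub_pos [Nontrivial V] : ∀ᵐ p : V × V, 0 < ‖p.1 - p.2‖ := by
  have h := (quasiMeasurePreserving_sub (volume : Measure V) volume).ae (Measure.ae_ne volume 0)
  filter_upwards [h] with p hp using norm_pos_iff.2 hp

lemma integrable_spatialIntegrand_iff [Nontrivial V] (hs : 0 < s)
    (hφ : AEStronglyMeasurable φ) (hψ : AEStronglyMeasurable ψ) :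
    Integrable (spatialIntegrand s φ ψ) (vol₊.prod volume)
      ↔ Integrable (rieszEnergyDensity s φ ψ) := by
  have hslice : ∀ᵐ p : V × V, Integrable (fun t => spatialIntegrand s φ ψ (t, p)) vol₊ :=
    ae_norm_sub_pos.mono fun p => integrable_time_spatialIntegrand hs
  have hnorm : (fun p => ∫ t in Ioi 0, ‖spatialIntegrand s φ ψ (t, p)‖)
      =ᵐ[volume] fun p => ‖(Gammaℝ s : ℂ) * rieszEnergyDensity s φ ψ p‖ := by
    filter_upwards [ae_norm_sub_pos] with p hp
    rw [integral_time_norm_spatialIntegrand, integral_time_spatialIntegrand hs hp]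
  have hmeas := aestronglyMeasurable_rieszEnergyDensity s hφ hψ
  rw [Measure.volume_eq_prod] at hslice hnorm ⊢
  rw [integrable_prod_iff' (aestronglyMeasurable_spatialIntegrand s hφ hψ),
    and_iff_right hslice, integrable_congr hnorm, integrable_norm_iff (hmeas.const_mul _),
    integrable_const_mul_iff (Gammaℝ_ofReal_ne_zero hs).isUnit]

lemma integrable_exp_neg_pi_sq_div (ht : 0 < t) :
    Integrable fun ξ : V => ((rexp (-(π * ‖ξ‖ ^ 2 / t)) : ℝ) : ℂ) := by
  have h := GaussianFourier.integrable_cexp_neg_mul_sq_norm_add (V := V) (b := ((π / t : ℝ) : ℂ))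
    (by rw [Complex.ofReal_re]; positivity) 0 0
  refine h.congr (.of_forall fun ξ => ?_)
  push_cast
  ring_nf

lemma integrable_spectralIntegrand_slice (hφ : Integrable φ) (hψ : Integrable ψ) (ht : 0 < t) :
    Integrable fun ξ => spectralIntegrand a (𝓕 φ) (𝓕 ψ) (t, ξ) := by
  have hcont := (continuous_fourier_of_integrable hφ).mul
    (Complex.continuous_conj.comp (continuous_fourier_of_integrable hψ))
  simp only [spectralIntegrand, Complex.ofReal_mul]
  refine ((integrable_exp_neg_pi_sq_div ht).const_mul _).bdd_mul
    (c := (∫ x, ‖φ x‖) * ∫ x, ‖ψ x‖) hcont.aestronglyMeasurable (.of_forall fun ξ => ?_)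
  rw [norm_mul, RCLike.norm_conj]
  gcongr <;> exact norm_fourier_le_integral_norm _ ξ

lemma integral_spatialIntegrand_eq_integral_spectralIntegrand (s : ℝ) (hφ : Integrable φ)
    (hψ : Integrable ψ) (ht : 0 < t) :
    ∫ p, spatialIntegrand s φ ψ (t, p)
      = ∫ ξ, spectralIntegrand (finrank ℝ V - s) (𝓕 φ) (𝓕 ψ) (t, ξ) := by
  have hpow : t ^ (s / 2 - 1)
      = t ^ (-(finrank ℝ V - s) / 2 - 1) * t ^ (finrank ℝ V / 2 : ℝ) := by
    rw [← rpow_add ht]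
    ring_nf
  have h := integral_fourier_mul_conj_fourier_mul hφ hψ (integrable_exp_neg_pi_sq_div ht)
  simp only [fourier_exp_neg_pi_sq_div ht] at h
  simp only [spatialIntegrand, spectralIntegrand, hpow, mul_assoc, Complex.ofReal_mul,
    mul_left_comm _ ((t ^ (-(finrank ℝ V - s) / 2 - 1) : ℝ) : ℂ), integral_const_mul] at h ⊢
  rw [h]

lemma integrable_spectralIntegrand_of_spatialIntegrand_self (hφ : Integrable φ)
    (h : Integrable (spatialIntegrand s φ φ) (vol₊.prod volume)) :
    Integrable (spectralIntegrand (finrank ℝ V - s) (𝓕 φ) (𝓕 φ)) (vol₊.prod volume) := by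
  have hmeas := (continuous_fourier_of_integrable hφ).aestronglyMeasurable (μ := volume)
  refine integrable_prod_of_integrable_integral_of_nonneg
    (aestronglyMeasurable_spectralIntegrand _ hmeas hmeas) ?_ ?_ (h.integral_prod_left.congr ?_)
  all_goals filter_upwards [ae_restrict_mem measurableSet_Ioi] with t ht
  · exact spectralIntegrand_self_nonneg ht
  · exact integrable_spectralIntegrand_slice hφ hφ ht
  · exact integral_spatialIntegrand_eq_integral_spectralIntegrand s hφ hφ ht

lemma integrable_spatialIntegrand_of_spectralIntegrand (hφ_nonneg : 0 ≤ φ) (hψ_nonneg : 0 ≤ ψ)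
    (hφ : Integrable φ) (hψ : Integrable ψ)
    (h : Integrable (spectralIntegrand (finrank ℝ V - s) (𝓕 φ) (𝓕 ψ)) (vol₊.prod volume)) :
    Integrable (spatialIntegrand s φ ψ) (vol₊.prod volume) := by
  refine integrable_prod_of_integrable_integral_of_nonneg
    (aestronglyMeasurable_spatialIntegrand _ hφ.1 hψ.1) ?_ ?_ (h.integral_prod_left.congr ?_)
  all_goals filter_upwards [ae_restrict_mem measurableSet_Ioi] with t ht
  · exact spatialIntegrand_nonneg hφ_nonneg hψ_nonneg ht
  · exact integrable_spatialIntegrand_slice hφ hψ ht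
  · exact (integral_spatialIntegrand_eq_integral_spectralIntegrand s hφ hψ ht).symm

lemma integrable_spectralIntegrand_of_spatialIntegrand (hφ : Integrable φ) (hψ : Integrable ψ)
    (hφφ : Integrable (spatialIntegrand s φ φ) (vol₊.prod volume))
    (hψψ : Integrable (spatialIntegrand s ψ ψ) (vol₊.prod volume)) :
    Integrable (spectralIntegrand (finrank ℝ V - s) (𝓕 φ) (𝓕 ψ)) (vol₊.prod volume) :=
  integrable_spectralIntegrand_of_self
    (continuous_fourier_of_integrable hφ).aestronglyMeasurable
    (continuous_fourier_of_integrable hψ).aestronglyMeasurable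
    (integrable_spectralIntegrand_of_spatialIntegrand_self hφ hφφ)
    (integrable_spectralIntegrand_of_spatialIntegrand_self hψ hψψ)

lemma integrable_spatialIntegrand_of_self (hφ : Integrable φ) (hψ : Integrable ψ)
    (hφφ : Integrable (spatialIntegrand s φ φ) (vol₊.prod volume))
    (hψψ : Integrable (spatialIntegrand s ψ ψ) (vol₊.prod volume)) :
    Integrable (spatialIntegrand s φ ψ) (vol₊.prod volume) := by
  have hnorm_nonneg (f : V → ℂ) : 0 ≤ fun x => (‖f x‖ : ℂ) :=
    fun x => Complex.zero_le_real.2 (norm_nonneg (f x))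
  rw [Measure.volume_eq_prod] at hφφ hψψ ⊢
  rw [← integrable_spatialIntegrand_norm_iff hφ.1 hψ.1]
  rw [← integrable_spatialIntegrand_norm_iff hφ.1 hφ.1] at hφφ
  rw [← integrable_spatialIntegrand_norm_iff hψ.1 hψ.1] at hψψ
  exact integrable_spatialIntegrand_of_spectralIntegrand (hnorm_nonneg φ) (hnorm_nonneg ψ)
    hφ.norm.ofReal hψ.norm.ofReal
    (integrable_spectralIntegrand_of_spatialIntegrand hφ.norm.ofReal hψ.norm.ofReal hφφ hψψ)

lemma integral_time_integral_spatialIntegrand [Nontrivial V] (hs : 0 < s)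
    (h : Integrable (spatialIntegrand s φ ψ) (vol₊.prod volume)) :
    ∫ t in Ioi 0, ∫ p, spatialIntegrand s φ ψ (t, p)
      = Gammaℝ s * ∫ p, rieszEnergyDensity s φ ψ p := by
  rw [integral_integral_swap (f := fun t p => spatialIntegrand s φ ψ (t, p)) h,
    ← integral_const_mul]
  exact integral_congr_ae (ae_norm_sub_pos.mono fun p => integral_time_spatialIntegrand hs)

lemma integral_time_integral_spectralIntegrand [Nontrivial V] (ha : 0 < a)
    (h : Integrable (spectralIntegrand a f g) (vol₊.prod volume)) :
    ∫ t in Ioi 0, ∫ ξ, spectralIntegrand a f g (t, ξ)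
      = Gammaℝ a * ∫ ξ, f ξ * conj (g ξ) * (‖ξ‖ ^ (-a) : ℝ) := by
  rw [integral_integral_swap (f := fun t ξ => spectralIntegrand a f g (t, ξ)) h,
    ← integral_const_mul]
  exact integral_congr_ae ((Measure.ae_ne volume 0).mono fun ξ hξ =>
    integral_time_spectralIntegrand ha (norm_pos_iff.2 hξ))

theorem riesz_parseval (hs : 0 < s) (hsd : s < finrank ℝ V)
    (hφ : Integrable φ) (hψ : Integrable ψ)
    (hφφ : Integrable (rieszEnergyDensity s φ φ)) (hψψ : Integrable (rieszEnergyDensity s ψ ψ)) :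
    Gammaℝ s * ∫ x, ∫ y, φ x * conj (ψ y) * (‖x - y‖ ^ (-s) : ℝ)
      = Gammaℝ (finrank ℝ V - s) *
        ∫ ξ, 𝓕 φ ξ * conj (𝓕 ψ ξ) * (‖ξ‖ ^ (-(finrank ℝ V - s)) : ℝ) := by
  have : Nontrivial V :=
    Module.nontrivial_of_finrank_pos (R := ℝ) (by exact_mod_cast hs.trans hsd)
  have hφφ' := (integrable_spatialIntegrand_iff hs hφ.1 hφ.1).2 hφφ
  have hψψ' := (integrable_spatialIntegrand_iff hs hψ.1 hψ.1).2 hψψ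
  have hspatial := integrable_spatialIntegrand_of_self hφ hψ hφφ' hψψ'
  have hspectral := integrable_spectralIntegrand_of_spatialIntegrand hφ hψ hφφ' hψψ'
  calc Gammaℝ s * ∫ x, ∫ y, φ x * conj (ψ y) * (‖x - y‖ ^ (-s) : ℝ)
    _ = Gammaℝ s * ∫ p, rieszEnergyDensity s φ ψ p := by
      rw [Measure.volume_eq_prod, integral_prod _
        ((integrable_spatialIntegrand_iff hs hφ.1 hψ.1).1 hspatial)]
      rfl
    _ = ∫ t in Ioi 0, ∫ p, spatialIntegrand s φ ψ (t, p) :=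
      (integral_time_integral_spatialIntegrand hs hspatial).symm
    _ = ∫ t in Ioi 0, ∫ ξ, spectralIntegrand (finrank ℝ V - s) (𝓕 φ) (𝓕 ψ) (t, ξ) :=
      setIntegral_congr_fun measurableSet_Ioi fun t ht =>
        integral_spatialIntegrand_eq_integral_spectralIntegrand s hφ hψ ht
    _ = _ := by
      rw [integral_time_integral_spectralIntegrand (sub_pos.2 hsd) hspectral]
      push_cast
      rfl

end Subordination

section OneDimensional

lemma fourierT_eq_fourier (φ : ℝ → ℝ) (ξ : ℝ) :
    fourierT φ ξ = 𝓕 (fun x => (φ x : ℂ)) (ξ / (2 * π)) := by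
  rw [fourier_real_eq_integral_exp_smul, fourierT]
  refine integral_congr_ae (.of_forall fun x => ?_)
  have hπ : (π : ℂ) ≠ 0 := by exact_mod_cast pi_ne_zero
  simp only [smul_eq_mul]
  congr 2
  push_cast
  field_simp

lemma integral_fourier_mul_conj_fourier_eq_integral_fourierT (φ ψ : ℝ → ℝ) (a : ℝ) :
    ∫ ξ : ℝ, 𝓕 (fun x => (φ x : ℂ)) ξ * conj (𝓕 (fun x => (ψ x : ℂ)) ξ) * (|ξ| ^ (-a) : ℝ)
      = ((2 * π) ^ (a - 1) : ℝ) *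
        ∫ ξ : ℝ, fourierT φ ξ * conj (fourierT ψ ξ) * (|ξ| ^ (-a) : ℝ) := by
  have h2π : 0 < 2 * π := by positivity
  have h := Measure.integral_comp_div (fun ξ : ℝ =>
    𝓕 (fun x => (φ x : ℂ)) ξ * conj (𝓕 (fun x => (ψ x : ℂ)) ξ) * (|ξ| ^ (-a) : ℝ)) (2 * π)
  have hscale (ξ : ℝ) : |ξ / (2 * π)| ^ (-a) = (2 * π) ^ a * |ξ| ^ (-a) := by
    rw [abs_div, abs_of_pos h2π, div_rpow (abs_nonneg ξ) h2π.le, rpow_neg h2π.le, div_inv_eq_mul,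
      mul_comm]
  simp only [← fourierT_eq_fourier, hscale, Complex.ofReal_mul,
    mul_left_comm _ (((2 * π) ^ a : ℝ) : ℂ), integral_const_mul, abs_of_pos h2π,
    Complex.real_smul] at h
  have h2π_ne : ((2 * π : ℝ) : ℂ) ≠ 0 := Complex.ofReal_ne_zero.2 h2π.ne'
  rw [rpow_sub_one h2π.ne', Complex.ofReal_div, div_mul_eq_mul_div, h, ← Complex.ofReal_mul,
    mul_div_cancel_left₀ _ h2π_ne]

lemma Gammaℝ_eq_Gammaℝ_one_sub_mul {a : ℝ} (ha0 : 0 < a) (ha1 : a < 1) :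
    Gammaℝ a = Gammaℝ (1 - a) *
      ((2 * (2 * π) ^ (-a) * Gamma a * cos (π * a / 2) : ℝ) : ℂ) := by
  have hpole (n : ℕ) : (a : ℂ) ≠ -(2 * n + 1) := fun h => by
    have h_re : a = -(2 * n + 1) := by exact_mod_cast h
    linarith [n.cast_nonneg (α := ℝ)]
  have hne : Gammaℝ (1 - a) ≠ 0 := by
    exact_mod_cast Gammaℝ_ofReal_ne_zero (sub_pos.2 ha1)
  have h := (div_eq_iff hne).1 (Complex.Gammaℝ_div_Gammaℝ_one_sub hpole)
  rw [h, Complex.Gammaℂ_def, mul_comm]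
  push_cast [← Complex.Gamma_ofReal, Complex.ofReal_cpow two_pi_pos.le]
  rfl

theorem fourierT_riesz_parseval {a : ℝ} (ha0 : 0 < a) (ha1 : a < 1) {φ ψ : ℝ → ℝ}
    (hφ : Integrable φ) (hψ : Integrable ψ)
    (hφφ : Integrable fun p : ℝ × ℝ => φ p.1 * φ p.2 * |p.1 - p.2| ^ (a - 1))
    (hψψ : Integrable fun p : ℝ × ℝ => ψ p.1 * ψ p.2 * |p.1 - p.2| ^ (a - 1)) :
    ((∫ x, ∫ y, φ x * ψ y * |x - y| ^ (a - 1) : ℝ) : ℂ)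
      = ((Gamma a * cos (π * a / 2) / π : ℝ) : ℂ) *
        ∫ ξ, fourierT φ ξ * conj (fourierT ψ ξ) * (|ξ| ^ (-a) : ℝ) := by
  have henergy {f : ℝ → ℝ}
      (hf : Integrable fun p : ℝ × ℝ => f p.1 * f p.2 * |p.1 - p.2| ^ (a - 1)) :
      Integrable (rieszEnergyDensity (1 - a) (fun x => (f x : ℂ)) fun x => (f x : ℂ)) := by
    refine hf.ofReal.congr (.of_forall fun p => ?_)
    simp [rieszEnergyDensity]
  have h := riesz_parseval (φ := fun x => (φ x : ℂ)) (ψ := fun x => (ψ x : ℂ))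
    (sub_pos.2 ha1) (by simpa using ha0) hφ.ofReal hψ.ofReal (henergy hφφ) (henergy hψψ)
  simp only [Module.finrank_self, Nat.cast_one, Complex.ofReal_sub, Complex.ofReal_one,
    sub_sub_cancel, neg_sub, integral_fourier_mul_conj_fourier_eq_integral_fourierT,
    Complex.conj_ofReal, Real.norm_eq_abs, ← Complex.ofReal_mul, integral_complex_ofReal] at h
  rw [Gammaℝ_eq_Gammaℝ_one_sub_mul ha0 ha1, mul_assoc] at h
  have hGamma : Gammaℝ (1 - a) ≠ 0 := by
    exact_mod_cast Gammaℝ_ofReal_ne_zero (sub_pos.2 ha1)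
  have hpow : (2 * π) ^ (-a) * (2 * π) ^ (a - 1) = 1 / (2 * π) := by
    rw [← rpow_add two_pi_pos, one_div, ← rpow_neg_one]
    ring_nf
  have hconst : 2 * (2 * π) ^ (-a) * Gamma a * cos (π * a / 2) * (2 * π) ^ (a - 1)
      = Gamma a * cos (π * a / 2) / π := by
    linear_combination 2 * Gamma a * cos (π * a / 2) * hpow
  rw [mul_left_cancel₀ hGamma h, ← mul_assoc, ← Complex.ofReal_mul, hconst]

lemma mul_Gamma_two_mul_sub_one_mul_cos {H : ℝ} (hH : 1 / 2 < H) :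
    H * (2 * H - 1) * (Gamma (2 * H - 1) * cos (π * (2 * H - 1) / 2) / π)
      = Gamma (2 * H + 1) * sin (π * H) / (2 * π) := by
  have hGamma : Gamma (2 * H + 1) = 2 * H * ((2 * H - 1) * Gamma (2 * H - 1)) := by
    rw [Gamma_add_one (by linarith), ← Gamma_add_one (s := 2 * H - 1) (by linarith),
      sub_add_cancel]
  have hcos : cos (π * (2 * H - 1) / 2) = sin (π * H) := by
    rw [← cos_sub_pi_div_two]
    ring_nf
  rw [hGamma, hcos]
  ring

end OneDimensional

theorem stmt_10_general (H : ℝ) (h1 : 1 / 2 < H) (h2 : H < 1) (φ ψ : ℝ → ℝ)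
    (hφint : Integrable φ) (hψint : Integrable ψ)
    (hφE : Integrable (fun p : ℝ × ℝ => φ p.1 * φ p.2 * |p.1 - p.2| ^ (2 * H - 2)))
    (hψE : Integrable (fun p : ℝ × ℝ => ψ p.1 * ψ p.2 * |p.1 - p.2| ^ (2 * H - 2))) :
    (((H * (2 * H - 1) * ∫ x : ℝ, ∫ y : ℝ, φ x * ψ y * |x - y| ^ (2 * H - 2) : ℝ)) : ℂ)
      = ((Gamma (2 * H + 1) * Real.sin (π * H) / (2 * π) : ℝ) : ℂ) *
        ∫ ξ : ℝ, fourierT φ ξ * (starRingEnd ℂ) (fourierT ψ ξ) * ((|ξ| ^ (1 - 2 * H) : ℝ) : ℂ) ∧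
    H * (2 * H - 1) * ∫ x : ℝ, ∫ y : ℝ, φ x * φ y * |x - y| ^ (2 * H - 2)
      = (Gamma (2 * H + 1) * Real.sin (π * H) / (2 * π)) *
        ∫ ξ : ℝ, ‖fourierT φ ξ‖ ^ 2 * |ξ| ^ (1 - 2 * H) := by
  have hs : 2 * H - 2 = 2 * H - 1 - 1 := by ring
  have ha : 1 - 2 * H = -(2 * H - 1) := by ring
  have ha0 : 0 < 2 * H - 1 := by linarith
  have ha1 : 2 * H - 1 < 1 := by linarith
  simp only [hs] at hφE hψE
  rw [hs, ha, ← mul_Gamma_two_mul_sub_one_mul_cos h1]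
  constructor
  · rw [Complex.ofReal_mul, Complex.ofReal_mul (H * (2 * H - 1)), mul_assoc,
      fourierT_riesz_parseval ha0 ha1 hφint hψint hφE hψE]
  · have h := fourierT_riesz_parseval ha0 ha1 hφint hφint hφE hφE
    rw [integral_mul_conj_self_mul_ofReal, ← Complex.ofReal_mul] at h
    rw [Complex.ofReal_injective h, mul_assoc (H * (2 * H - 1))]

/-- The fBm-type Parseval identity: for nonnegative integrable `φ, ψ` with finite energies,
`α_H ∫∫ φ(x)ψ(y)|x-y|^{2H-2} dx dy = c_H ∫ 𝓕φ(ξ) conj(𝓕ψ(ξ)) |ξ|^{1-2H} dξ`,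
and in particular `E(φ) = c_H ∫ |𝓕φ(ξ)|² |ξ|^{1-2H} dξ`, where
`α_H = H(2H-1)` and `c_H = Γ(2H+1) sin(πH)/(2π)`. -/
theorem stmt_10 (H : ℝ) (h1 : 1 / 2 < H) (h2 : H < 1)
    (φ ψ : ℝ → ℝ) (hφ0 : ∀ x, 0 ≤ φ x) (hψ0 : ∀ x, 0 ≤ ψ x)
    (hφint : Integrable φ) (hψint : Integrable ψ)
    (hφE : Integrable (fun p : ℝ × ℝ => φ p.1 * φ p.2 * |p.1 - p.2| ^ (2 * H - 2)))
    (hψE : Integrable (fun p : ℝ × ℝ => ψ p.1 * ψ p.2 * |p.1 - p.2| ^ (2 * H - 2))) :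
    (((H * (2 * H - 1) * ∫ x : ℝ, ∫ y : ℝ, φ x * ψ y * |x - y| ^ (2 * H - 2) : ℝ)) : ℂ)
      = ((Gamma (2 * H + 1) * Real.sin (π * H) / (2 * π) : ℝ) : ℂ) *
        ∫ ξ : ℝ, fourierT φ ξ * (starRingEnd ℂ) (fourierT ψ ξ) * ((|ξ| ^ (1 - 2 * H) : ℝ) : ℂ) ∧
    H * (2 * H - 1) * ∫ x : ℝ, ∫ y : ℝ, φ x * φ y * |x - y| ^ (2 * H - 2)
      = (Gamma (2 * H + 1) * Real.sin (π * H) / (2 * π)) *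
        ∫ ξ : ℝ, ‖fourierT φ ξ‖ ^ 2 * |ξ| ^ (1 - 2 * H) :=
  stmt_10_general H h1 h2 φ ψ hφint hψint hφE hψE
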